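/- arXiv:1509.07081 — 4 statements merged into one kernel-verified Lean document; each statement's English description precedes it below -/
import Mathlib

section
/- Let E be a stable L^0(F)-module and let 𝒯 be a topology on E making E[𝒯] a topological L^0-module. Then 𝒯 is stably induced by some family of L^0-seminorms if and only if there is a neighborhood base 𝒰 of 0 ∈ E for 𝒯 such that (1) every U ∈ 𝒰 is L^0-convex, L^0-absorbent, L^0-balanced and stable, and (2) for every partition {A_k} of Ω and every sequence {U_k} ⊆ 𝒰 one has Σ_k 1_{A_k}U_k ∈ 𝒰. -/
open MeasureTheory Filter

noncomputable section

namespace L0Module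

variable {Ω : Type*} [MeasurableSpace Ω] (P : Measure Ω)

/-- The ring structure on `L⁰ = L⁰(F)`, the space of a.e. equivalence classes of real-valued
random variables, with pointwise (a.e.) multiplication. -/
noncomputable instance : CommRing (Ω →ₘ[P] ℝ) :=
  { (inferInstance : AddCommGroup (Ω →ₘ[P] ℝ)),
    (inferInstance : CommMonoid (Ω →ₘ[P] ℝ)) with
    left_distrib := fun f g h => by
      refine AEEqFun.induction_on₃ f g h fun f hf g hg h hh => ?_
      rw [AEEqFun.mk_add_mk, AEEqFun.mk_mul_mk, AEEqFun.mk_mul_mk, AEEqFun.mk_mul_mk,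
        AEEqFun.mk_add_mk, AEEqFun.mk_eq_mk]
      filter_upwards with ω
      simp [mul_add]
    right_distrib := fun f g h => by
      refine AEEqFun.induction_on₃ f g h fun f hf g hg h hh => ?_
      rw [AEEqFun.mk_add_mk, AEEqFun.mk_mul_mk, AEEqFun.mk_mul_mk, AEEqFun.mk_mul_mk,
        AEEqFun.mk_add_mk, AEEqFun.mk_eq_mk]
      filter_upwards with ω
      simp [add_mul]
    zero_mul := fun f => by
      refine AEEqFun.induction_on f fun f hf => ?_
      have h0 : (0 : Ω →ₘ[P] ℝ) = AEEqFun.mk (fun _ => (0 : ℝ)) aestronglyMeasurable_const := rfl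
      rw [h0, AEEqFun.mk_mul_mk, AEEqFun.mk_eq_mk]
      filter_upwards with ω
      simp
    mul_zero := fun f => by
      refine AEEqFun.induction_on f fun f hf => ?_
      have h0 : (0 : Ω →ₘ[P] ℝ) = AEEqFun.mk (fun _ => (0 : ℝ)) aestronglyMeasurable_const := rfl
      rw [h0, AEEqFun.mk_mul_mk, AEEqFun.mk_eq_mk]
      filter_upwards with ω
      simp }

open Classical in
/-- The indicator `1_A` of a (measurable) set, as an element of `L⁰`. -/
noncomputable def ind (A : Set Ω) : Ω →ₘ[P] ℝ :=
  if hA : MeasurableSet A then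
    AEEqFun.mk (A.indicator fun _ => (1 : ℝ))
      ((measurable_const.indicator hA).aestronglyMeasurable)
  else 0

/-- A partition of `Ω`: a sequence of pairwise disjoint measurable sets whose union is `Ω`. -/
def IsPartition (A : ℕ → Set Ω) : Prop :=
  (∀ k, MeasurableSet (A k)) ∧ Pairwise (Function.onFun Disjoint A) ∧ (⋃ k, A k) = Set.univ

/-- `ε ∈ L⁰_{++}`: `ε > 0` almost surely. -/
def L0pos (ε : Ω →ₘ[P] ℝ) : Prop := ∀ᵐ ω ∂P, 0 < ε ω

variable {E : Type*} [AddCommGroup E] [Module (Ω →ₘ[P] ℝ) E]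

/-- The `L⁰`-module `E` is stable: every sequence `{x_k}` in `E` has a unique concatenation
along every partition `{A_k}`. -/
def IsStableModule (E : Type*) [AddCommGroup E] [Module (Ω →ₘ[P] ℝ) E] : Prop :=
  ∀ A : ℕ → Set Ω, IsPartition A → ∀ x : ℕ → E,
    ∃! z : E, ∀ k, ind P (A k) • z = ind P (A k) • x k

/-- The concatenation `Σ_k 1_{A_k} U_k` of a sequence of subsets of `E` along a partition. -/
def concatSet (A : ℕ → Set Ω) (U : ℕ → Set E) : Set E :=
  {x : E | ∀ k, ∃ u ∈ U k, ind P (A k) • x = ind P (A k) • u}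

/-- An `L⁰`-seminorm on the `L⁰`-module `E`: nonnegative-valued, absolutely homogeneous over
`L⁰` and subadditive. -/
def IsL0Seminorm (n : E → Ω →ₘ[P] ℝ) : Prop :=
  (∀ x : E, ∀ᵐ ω ∂P, 0 ≤ n x ω) ∧
  (∀ (η : Ω →ₘ[P] ℝ) (x : E), ∀ᵐ ω ∂P, n (η • x) ω = |η ω| * n x ω) ∧
  (∀ x y : E, ∀ᵐ ω ∂P, n (x + y) ω ≤ n x ω + n y ω)

/-- `L⁰`-convexity of a subset of `E`. -/
def L0Convex (U : Set E) : Prop :=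
  ∀ x ∈ U, ∀ y ∈ U, ∀ η : Ω →ₘ[P] ℝ, (∀ᵐ ω ∂P, 0 ≤ η ω ∧ η ω ≤ 1) →
    η • x + (1 - η) • y ∈ U

/-- `L⁰`-absorbency of a subset of `E`. -/
def L0Absorbent (U : Set E) : Prop :=
  ∀ x : E, ∃ η : Ω →ₘ[P] ℝ, L0pos P η ∧ ∃ u ∈ U, x = η • u

/-- `L⁰`-balancedness of a subset of `E`. -/
def L0Balanced (U : Set E) : Prop :=
  ∀ x ∈ U, ∀ η : Ω →ₘ[P] ℝ, (∀ᵐ ω ∂P, |η ω| ≤ 1) → η • x ∈ U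

/-- Stability of a subset of `E`: it contains every concatenation of its elements along
every partition. -/
def IsStableSet (U : Set E) : Prop :=
  ∀ A : ℕ → Set Ω, IsPartition A → ∀ x : ℕ → E, (∀ k, x k ∈ U) →
    ∀ z : E, (∀ k, ind P (A k) • z = ind P (A k) • x k) → z ∈ U

/-- The ball `{ξ : |ξ − η| ≤ ε a.s.}` in `L⁰`. -/
def L0ball (η ε : Ω →ₘ[P] ℝ) : Set (Ω →ₘ[P] ℝ) :=
  {ξ : Ω →ₘ[P] ℝ | ∀ᵐ ω ∂P, |ξ ω - η ω| ≤ ε ω}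

/-- The topology on `L⁰` with neighborhood base `{η + B_ε : ε ∈ L⁰_{++}}` at each `η`,
where `B_ε = {ξ : |ξ| ≤ ε a.s.}`. -/
noncomputable def L0Topology : TopologicalSpace (Ω →ₘ[P] ℝ) where
  IsOpen O := ∀ η ∈ O, ∃ ε : Ω →ₘ[P] ℝ, L0pos P ε ∧ L0ball P η ε ⊆ O
  isOpen_univ := fun η _ => by
    refine ⟨1, ?_, Set.subset_univ _⟩
    filter_upwards [AEEqFun.coeFn_one (β := ℝ) (μ := P)] with ω h
    rw [h]
    exact one_pos
  isOpen_inter := fun s t hs ht η hη => by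
    obtain ⟨ε₁, hε₁, hb₁⟩ := hs η hη.1
    obtain ⟨ε₂, hε₂, hb₂⟩ := ht η hη.2
    refine ⟨ε₁ ⊓ ε₂, ?_, ?_⟩
    · filter_upwards [hε₁, hε₂, AEEqFun.coeFn_inf ε₁ ε₂] with ω h1 h2 h3
      rw [h3]
      exact lt_inf_iff.2 ⟨h1, h2⟩
    · intro ξ hξ
      constructor
      · refine hb₁ ?_
        filter_upwards [hξ, AEEqFun.coeFn_inf ε₁ ε₂] with ω h1 h2
        rw [h2] at h1
        exact h1.trans inf_le_left
      · refine hb₂ ?_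
        filter_upwards [hξ, AEEqFun.coeFn_inf ε₁ ε₂] with ω h1 h2
        rw [h2] at h1
        exact h1.trans inf_le_right
  isOpen_sUnion := fun 𝒮 h η hη => by
    obtain ⟨s, hs, hηs⟩ := hη
    obtain ⟨ε, hε, hb⟩ := h s hs η hηs
    exact ⟨ε, hε, hb.trans (Set.subset_sUnion_of_mem hs)⟩

/-- The stable ball `U_{{F_k},{A_k},ε} = {x : Σ_k 1_{A_k}·max_{‖·‖ ∈ F_k} ‖x‖ ≤ ε}` attached
to a partition `{A_k}`, a sequence of finite sets of seminorms `{F_k}` and `ε ∈ L⁰_{++}`. -/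
def stableBall (A : ℕ → Set Ω) (Fam : ℕ → Set (E → Ω →ₘ[P] ℝ)) (ε : Ω →ₘ[P] ℝ) : Set E :=
  {x : E | ∀ᵐ ω ∂P, ∀ k, ω ∈ A k → ∀ n ∈ Fam k, n x ω ≤ ε ω}

/-- The topology `T` on `E` is stably induced by the family `𝒮` of `L⁰`-seminorms: the sets
`U_{{F_k},{A_k},ε}` (over partitions `{A_k}`, sequences `{F_k}` of nonempty finite subsets of
`𝒮` and `ε ∈ L⁰_{++}`) form a neighborhood base of `0 ∈ E` for `T`. -/
def StablyInduced (𝒮 : Set (E → Ω →ₘ[P] ℝ)) (T : TopologicalSpace E) : Prop :=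
  (∀ (A : ℕ → Set Ω) (Fam : ℕ → Set (E → Ω →ₘ[P] ℝ)) (ε : Ω →ₘ[P] ℝ),
    IsPartition A → (∀ k, (Fam k).Finite ∧ (Fam k).Nonempty ∧ Fam k ⊆ 𝒮) → L0pos P ε →
    stableBall P A Fam ε ∈ @nhds E T 0) ∧
  (∀ V : Set E, V ∈ @nhds E T 0 →
    ∃ (A : ℕ → Set Ω) (Fam : ℕ → Set (E → Ω →ₘ[P] ℝ)) (ε : Ω →ₘ[P] ℝ),
      IsPartition A ∧ (∀ k, (Fam k).Finite ∧ (Fam k).Nonempty ∧ Fam k ⊆ 𝒮) ∧ L0pos P ε ∧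
      stableBall P A Fam ε ⊆ V)

end L0Module

end

open L0Module

/-!
The seminorms attached to a base `𝒰` are the gauges: the gauge of `U` at `x` is the essential
infimum of all `ξ ≥ 0` with `x ∈ ξ • U`. An essential infimum is an a.e. infimum of countably many
members, so if the gauge of `x` is less than `1`, then `Ω` splits into countably many pieces on each
of which some `ξ < 1` witnesses `x ∈ ξ • U`; balancedness and stability of `U` glue the pieces to
`x ∈ U`. Closure of `𝒰` under concatenation is what makes the stable balls of the gauges
neighborhoods of `0`. Conversely, concatenating stable balls along a partition gives the stable
ball of the refined partition.
-/

namespace L0Module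

section EssentialInfimum

variable {Ω : Type*} [MeasurableSpace Ω] {P : Measure Ω}

instance : IsOrderedAddMonoid (Ω →ₘ[P] ℝ) where
  add_le_add_left f g hfg h := by
    rw [← AEEqFun.coeFn_le] at hfg ⊢
    filter_upwards [hfg, AEEqFun.coeFn_add f h, AEEqFun.coeFn_add g h] with ω hω hf hg
    simpa only [hf, hg, Pi.add_apply, add_le_add_iff_right] using hω

theorem nonneg_iff_ae {f : Ω →ₘ[P] ℝ} : 0 ≤ f ↔ ∀ᵐ ω ∂P, 0 ≤ f ω := by
  rw [← AEEqFun.coeFn_le]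
  refine eventually_congr ?_
  filter_upwards [AEEqFun.coeFn_zero (β := ℝ) (μ := P)] with ω h0
  rw [h0, Pi.zero_apply]

theorem exists_seq_forall_le_of_range_subset {α : Type*} [Nonempty α] {φ : (ℕ → α) → ℝ}
    (hbdd : BddBelow (Set.range φ))
    (hφ : ∀ s t : ℕ → α, Set.range s ⊆ Set.range t → φ t ≤ φ s) :
    ∃ t, ∀ s, φ t ≤ φ s := by
  obtain ⟨u, -, hu, hmem⟩ := exists_seq_tendsto_sInf (Set.range_nonempty φ) hbdd
  choose s hs using hmem
  let t : ℕ → α := fun m => s m.unpair.1 m.unpair.2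
  have hst (k : ℕ) : Set.range (s k) ⊆ Set.range t := by
    rintro _ ⟨j, rfl⟩
    exact ⟨Nat.pair k j, by simp only [t, Nat.unpair_pair]⟩
  have ht : φ t ≤ sInf (Set.range φ) := ge_of_tendsto' hu fun k => hs k ▸ hφ _ _ (hst k)
  exact ⟨t, fun s' => ht.trans (csInf_le hbdd ⟨s', rfl⟩)⟩

variable {μ : Measure Ω} [IsFiniteMeasure μ]

theorem integrable_arctan {f : Ω → ℝ} (hf : Measurable f) :
    Integrable (fun ω => Real.arctan (f ω)) μ := by
  refine .of_bound (Real.measurable_arctan.comp hf).aestronglyMeasurable (Real.pi / 2) ?_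
  exact .of_forall fun ω =>
    abs_le.2 ⟨(Real.neg_pi_div_two_lt_arctan _).le, (Real.arctan_lt_pi_div_two _).le⟩

theorem neg_pi_div_two_mul_le_integral_arctan {f : Ω → ℝ} (hf : Measurable f) :
    -(Real.pi / 2) * μ.real Set.univ ≤ ∫ ω, Real.arctan (f ω) ∂μ := by
  calc -(Real.pi / 2) * μ.real Set.univ = ∫ _, -(Real.pi / 2) ∂μ := by
        rw [integral_const, smul_eq_mul, mul_comm]
    _ ≤ ∫ ω, Real.arctan (f ω) ∂μ :=
        integral_mono (integrable_const _) (integrable_arctan hf)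
          fun ω => (Real.neg_pi_div_two_lt_arctan (f ω)).le

theorem ae_eq_of_ae_le_of_integral_arctan_le {f g : Ω → ℝ} (hf : Measurable f)
    (hg : Measurable g) (hfg : f ≤ᵐ[μ] g)
    (hint : ∫ ω, Real.arctan (g ω) ∂μ ≤ ∫ ω, Real.arctan (f ω) ∂μ) : f =ᵐ[μ] g := by
  have harctan : (fun ω => Real.arctan (f ω)) ≤ᵐ[μ] fun ω => Real.arctan (g ω) :=
    hfg.mono fun ω hω => Real.arctan_strictMono.monotone hω
  have heq := (integral_eq_iff_of_ae_le (integrable_arctan hf) (integrable_arctan hg) harctan).1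
    ((integral_mono_ae (integrable_arctan hf) (integrable_arctan hg) harctan).antisymm hint)
  exact heq.mono fun ω hω => Real.arctan_injective hω

theorem ae_iInf_le_iInf_of_range_subset {S : Set (Ω →ₘ[P] ℝ)} (hS : BddBelow S) {s t : ℕ → S}
    (hst : Set.range s ⊆ Set.range t) :
    ∀ᵐ ω ∂P, ⨅ n, (t n : Ω →ₘ[P] ℝ) ω ≤ ⨅ n, (s n : Ω →ₘ[P] ℝ) ω := by
  obtain ⟨b, hb⟩ := hS
  have hbt : ∀ᵐ ω ∂P, ∀ n, b ω ≤ (t n : Ω →ₘ[P] ℝ) ω :=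
    ae_all_iff.2 fun n => AEEqFun.coeFn_le.2 (hb (t n).2)
  filter_upwards [hbt] with ω hω
  refine le_ciInf fun n => ?_
  obtain ⟨m, hm⟩ := hst ⟨n, rfl⟩
  exact hm ▸ ciInf_le ⟨b ω, Set.forall_mem_range.2 hω⟩ m

variable [SFinite P]

-- Minimise `∫ arctan (⨅ n, s n)` over all sequences `s` in `S`: adjoining a further member of `S`
-- to a minimiser cannot lower its infimum on a non-null set.
theorem exists_seq_ae_iInf_le {S : Set (Ω →ₘ[P] ℝ)} (hne : S.Nonempty) (hS : BddBelow S) :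
    ∃ s : ℕ → S, ∀ f ∈ S, ∀ᵐ ω ∂P, ⨅ n, (s n : Ω →ₘ[P] ℝ) ω ≤ f ω := by
  have := hne.to_subtype
  let inf (s : ℕ → S) (ω : Ω) : ℝ := ⨅ n, (s n : Ω →ₘ[P] ℝ) ω
  have hmeas (s : ℕ → S) : Measurable (inf s) := .iInf fun n => (s n : Ω →ₘ[P] ℝ).measurable
  have hmono (s t : ℕ → S) (hst : Set.range s ⊆ Set.range t) : inf t ≤ᵐ[P.toFinite] inf s :=
    (ae_toFinite (μ := P)).symm ▸ ae_iInf_le_iInf_of_range_subset hS hst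
  obtain ⟨t, ht⟩ := exists_seq_forall_le_of_range_subset
    (φ := fun s : ℕ → S => ∫ ω, Real.arctan (inf s ω) ∂P.toFinite)
    ⟨_, Set.forall_mem_range.2 fun s => neg_pi_div_two_mul_le_integral_arctan (hmeas s)⟩
    fun s t hst => integral_mono_ae (integrable_arctan (hmeas t)) (integrable_arctan (hmeas s))
      ((hmono s t hst).mono fun ω hω => Real.arctan_strictMono.monotone hω)
  refine ⟨t, fun f hf => ?_⟩
  let t' : ℕ → S := fun n => Nat.casesOn n ⟨f, hf⟩ t
  have htt' : Set.range t ⊆ Set.range t' := Set.range_subset_iff.2 fun n => ⟨n + 1, rfl⟩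
  have heq : inf t' =ᵐ[P.toFinite] inf t :=
    ae_eq_of_ae_le_of_integral_arctan_le (hmeas t') (hmeas t) (hmono t t' htt') (ht t')
  have hft' : Set.range (fun _ : ℕ => (⟨f, hf⟩ : S)) ⊆ Set.range t' :=
    Set.range_subset_iff.2 fun _ => ⟨0, rfl⟩
  rw [← ae_toFinite]
  filter_upwards [heq, hmono _ t' hft'] with ω hω hle
  exact hω.symm.trans_le (hle.trans_eq ciInf_const)

theorem exists_isGLB_ae_eq_iInf {S : Set (Ω →ₘ[P] ℝ)} (hne : S.Nonempty) (hS : BddBelow S) :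
    ∃ p : Ω →ₘ[P] ℝ, IsGLB S p ∧
      ∃ s : ℕ → S, ∀ᵐ ω ∂P, p ω = ⨅ n, (s n : Ω →ₘ[P] ℝ) ω := by
  obtain ⟨s, hs⟩ := exists_seq_ae_iInf_le hne hS
  have hmeas : Measurable fun ω => ⨅ n, (s n : Ω →ₘ[P] ℝ) ω :=
    .iInf fun n => (s n : Ω →ₘ[P] ℝ).measurable
  have hmk := AEEqFun.coeFn_mk _ (hmeas.aestronglyMeasurable (μ := P))
  refine ⟨_, ⟨fun f hf => ?_, fun q hq => ?_⟩, s, hmk⟩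
  · rw [← AEEqFun.coeFn_le]
    exact hmk.le.trans (hs f hf)
  · have hqs : ∀ᵐ ω ∂P, ∀ n, q ω ≤ (s n : Ω →ₘ[P] ℝ) ω :=
      ae_all_iff.2 fun n => AEEqFun.coeFn_le.2 (hq (s n).2)
    rw [← AEEqFun.coeFn_le]
    filter_upwards [hqs, hmk] with ω hω hmkω
    exact (le_ciInf hω).trans_eq hmkω.symm

end EssentialInfimum

section ScalarCalculus

variable {Ω : Type*} [MeasurableSpace Ω] {P : Measure Ω}

/-- The a.e. pointwise inverse of `f ∈ L⁰`, equal to `0` where `f` vanishes. It serves as a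
generalized inverse in the ring `L⁰`, which is not a field. -/
noncomputable def pointwiseInv (f : Ω →ₘ[P] ℝ) : Ω →ₘ[P] ℝ :=
  AEEqFun.compMeasurable (fun x : ℝ => x⁻¹) measurable_inv f

theorem pointwiseInv_ae (f : Ω →ₘ[P] ℝ) : ∀ᵐ ω ∂P, pointwiseInv f ω = (f ω)⁻¹ :=
  AEEqFun.coeFn_compMeasurable _ _ f

theorem mul_pointwiseInv_ae (f g : Ω →ₘ[P] ℝ) :
    ∀ᵐ ω ∂P, (f * pointwiseInv g) ω = f ω / g ω := by
  filter_upwards [AEEqFun.coeFn_mul f (pointwiseInv g), pointwiseInv_ae g] with ω hmul hinv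
  rw [hmul, Pi.mul_apply, hinv, div_eq_mul_inv]

theorem mul_mul_pointwiseInv_cancel {f g : Ω →ₘ[P] ℝ} (h : ∀ᵐ ω ∂P, g ω = 0 → f ω = 0) :
    g * (f * pointwiseInv g) = f := by
  apply AEEqFun.ext
  filter_upwards [h, AEEqFun.coeFn_mul g (f * pointwiseInv g), mul_pointwiseInv_ae f g]
    with ω hω hmul hdiv
  rw [hmul, Pi.mul_apply, hdiv, mul_div_cancel_of_imp' hω]

theorem ind_ae {A : Set Ω} (hA : MeasurableSet A) :
    ∀ᵐ ω ∂P, ind P A ω = A.indicator 1 ω := by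
  rw [ind, dif_pos hA]
  exact AEEqFun.coeFn_mk _ _

theorem ind_mul_ind {A : Set Ω} (hA : MeasurableSet A) : ind P A * ind P A = ind P A := by
  apply AEEqFun.ext
  filter_upwards [AEEqFun.coeFn_mul (ind P A) (ind P A), ind_ae hA] with ω hmul hind
  by_cases hω : ω ∈ A <;> simp [hmul, hind, hω]

end ScalarCalculus

section Partitions

variable {Ω : Type*} [MeasurableSpace Ω]

theorem IsPartition.exists_mem {A : ℕ → Set Ω} (hA : IsPartition A) (ω : Ω) : ∃ k, ω ∈ A k :=
  Set.iUnion_eq_univ_iff.1 hA.2.2 ω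

theorem isPartition_disjointed {B : ℕ → Set Ω} (hB : ∀ k, MeasurableSet (B k))
    (hcover : ⋃ k, B k = Set.univ) : IsPartition (disjointed B) :=
  ⟨.disjointed hB, disjoint_disjointed B, iUnion_disjointed.trans hcover⟩

theorem exists_isPartition_ae_subset {P : Measure Ω} {B : ℕ → Set Ω}
    (hB : ∀ k, MeasurableSet (B k)) (hcover : ∀ᵐ ω ∂P, ∃ k, ω ∈ B k) :
    ∃ A, IsPartition A ∧ ∀ᵐ ω ∂P, ∀ k, ω ∈ A k → ω ∈ B k := by
  refine ⟨disjointed fun k => B k ∪ (⋃ j, B j)ᶜ,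
    isPartition_disjointed (fun k => (hB k).union (MeasurableSet.iUnion hB).compl) ?_, ?_⟩
  · rw [← Set.iUnion_union, Set.union_compl_self]
  · filter_upwards [hcover] with ω hω k hk
    exact (disjointed_subset _ k hk).resolve_right (not_not_intro (Set.mem_iUnion.2 hω))

theorem IsPartition.inter_unpair {A : ℕ → Set Ω} (hA : IsPartition A) {B : ℕ → ℕ → Set Ω}
    (hB : ∀ k, IsPartition (B k)) :
    IsPartition fun m : ℕ => A m.unpair.1 ∩ B m.unpair.1 m.unpair.2 := by
  refine ⟨fun m => (hA.1 _).inter ((hB _).1 _), fun m m' hne => ?_, ?_⟩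
  · by_cases hfst : m.unpair.1 = m'.unpair.1
    · have hsnd : m.unpair.2 ≠ m'.unpair.2 := fun hsnd =>
        hne (by rw [← Nat.pair_unpair m, ← Nat.pair_unpair m', hfst, hsnd])
      simp only [Function.onFun, hfst]
      exact ((hB _).2.1 hsnd).mono Set.inter_subset_right Set.inter_subset_right
    · exact (hA.2.1 hfst).mono Set.inter_subset_left Set.inter_subset_left
  · refine Set.iUnion_eq_univ_iff.2 fun ω => ?_
    obtain ⟨k, hk⟩ := hA.exists_mem ω
    obtain ⟨j, hj⟩ := (hB k).exists_mem ω
    exact ⟨Nat.pair k j, by simpa only [Nat.unpair_pair] using ⟨hk, hj⟩⟩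

theorem IsPartition.exists_concat {P : Measure Ω} {A : ℕ → Set Ω} (hA : IsPartition A)
    (f : ℕ → Ω →ₘ[P] ℝ) : ∃ g : Ω →ₘ[P] ℝ, ∀ᵐ ω ∂P, ∀ k, ω ∈ A k → g ω = f k ω := by
  obtain ⟨g, hg, hgA⟩ := exists_measurable_piecewise A hA.1 (fun k => (f k : Ω → ℝ))
    (fun k => (f k).measurable)
    (fun i j hij ω hω => absurd hω.2 (Set.disjoint_left.1 (hA.2.1 hij) hω.1))
  refine ⟨AEEqFun.mk g hg.aestronglyMeasurable, ?_⟩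
  filter_upwards [AEEqFun.coeFn_mk g hg.aestronglyMeasurable] with ω hmk k hk
  rw [hmk, hgA k hk]

end Partitions

section Seminorms

variable {Ω : Type*} [MeasurableSpace Ω] {P : Measure Ω}
  {E : Type*} [AddCommGroup E] [Module (Ω →ₘ[P] ℝ) E]

theorem IsL0Seminorm.ae_eq_on {n : E → Ω →ₘ[P] ℝ} (hn : IsL0Seminorm P n) {A : Set Ω}
    (hA : MeasurableSet A) {x y : E} (h : ind P A • x = ind P A • y) :
    ∀ᵐ ω ∂P, ω ∈ A → n x ω = n y ω := by
  filter_upwards [hn.2.1 (ind P A) x, hn.2.1 (ind P A) y, ind_ae hA] with ω hx hy hind hω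
  rw [h, hy, hind] at hx
  simpa [hω] using hx.symm

-- Apply `hsmul` to `η⁻¹` and `η • x` on `{η ≠ 0}`; the remaining part `(1 - η⁻¹ * η) • x` of `x` is
-- negligible there.
theorem isL0Seminorm_of_smul_le {n : E → Ω →ₘ[P] ℝ} (hnonneg : ∀ x, ∀ᵐ ω ∂P, 0 ≤ n x ω)
    (hadd : ∀ x y, ∀ᵐ ω ∂P, n (x + y) ω ≤ n x ω + n y ω)
    (hsmul : ∀ (η : Ω →ₘ[P] ℝ) (x : E), ∀ᵐ ω ∂P, n (η • x) ω ≤ |η ω| * n x ω) :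
    IsL0Seminorm P n := by
  refine ⟨hnonneg, fun η x => ?_, hadd⟩
  let π := η * pointwiseInv η
  have hsplit : pointwiseInv η • η • x + (1 - π) • x = x := by
    rw [smul_smul, mul_comm, ← add_smul, add_sub_cancel, one_smul]
  have hsub := hsplit ▸ hadd (pointwiseInv η • η • x) ((1 - π) • x)
  filter_upwards [hsmul η x, hsub, hsmul (pointwiseInv η) (η • x), hsmul (1 - π) x,
    pointwiseInv_ae η, AEEqFun.coeFn_sub 1 π, mul_pointwiseInv_ae η η,
    AEEqFun.coeFn_one (β := ℝ) (μ := P), hnonneg (η • x)]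
    with ω hle hsub hinv hrest hinv_eq hsub_eq hπ hone hnonneg
  refine hle.antisymm ?_
  rcases eq_or_ne (η ω) 0 with hη | hη
  · rwa [hη, abs_zero, zero_mul]
  · have hrest_nonpos : n ((1 - π) • x) ω ≤ 0 := by
      rwa [hsub_eq, Pi.sub_apply, hπ, hone, Pi.one_apply, div_self hη, sub_self, abs_zero,
        zero_mul] at hrest
    rw [hinv_eq, abs_inv] at hinv
    rw [← le_inv_mul_iff₀ (abs_pos.2 hη)]
    linarith

end Seminorms

section Gauge

variable {Ω : Type*} [MeasurableSpace Ω] (P : Measure Ω)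
  {E : Type*} [AddCommGroup E] [Module (Ω →ₘ[P] ℝ) E]

/-- The set of all `ξ ≥ 0` in `L⁰` with `x ∈ ξ • U`, whose essential infimum is the gauge of `U`
at `x`. -/
def gaugeSet (U : Set E) (x : E) : Set (Ω →ₘ[P] ℝ) :=
  {ξ | 0 ≤ ξ ∧ ∃ u ∈ U, x = ξ • u}

/-- The `L⁰`-gauge (Minkowski functional) of `U`: the greatest lower bound of `gaugeSet P U x` in
`L⁰`, that is, its essential infimum. The value is meaningless when there is no such bound. -/
noncomputable def l0Gauge (U : Set E) (x : E) : Ω →ₘ[P] ℝ :=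
  Classical.epsilon (IsGLB (gaugeSet P U x))

variable {P} {U : Set E}

theorem zero_mem_lowerBounds_gaugeSet (U : Set E) (x : E) :
    0 ∈ lowerBounds (gaugeSet P U x) := fun _ hξ => hξ.1

theorem L0Absorbent.gaugeSet_nonempty (hU : L0Absorbent P U) (x : E) :
    (gaugeSet P U x).Nonempty := by
  obtain ⟨η, hη, hx⟩ := hU x
  exact ⟨η, nonneg_iff_ae.2 (hη.mono fun _ => le_of_lt), hx⟩

theorem one_mem_gaugeSet {x : E} (hx : x ∈ U) : 1 ∈ gaugeSet P U x := by
  refine ⟨nonneg_iff_ae.2 ?_, x, hx, (one_smul _ x).symm⟩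
  filter_upwards [AEEqFun.coeFn_one (β := ℝ) (μ := P)] with ω hone
  exact hone ▸ zero_le_one

theorem L0Convex.add_mem_gaugeSet (hU : L0Convex P U) {x y : E} {f g : Ω →ₘ[P] ℝ}
    (hf : f ∈ gaugeSet P U x) (hg : g ∈ gaugeSet P U y) : f + g ∈ gaugeSet P U (x + y) := by
  obtain ⟨hf, u, hu, rfl⟩ := hf
  obtain ⟨hg, v, hv, rfl⟩ := hg
  let η := f * pointwiseInv (f + g)
  have hη : (f + g) * η = f := by
    refine mul_mul_pointwiseInv_cancel ?_
    filter_upwards [nonneg_iff_ae.1 hf, nonneg_iff_ae.1 hg, AEEqFun.coeFn_add f g]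
      with ω hf hg hadd hzero
    rw [hadd, Pi.add_apply] at hzero
    linarith
  have hη' : (f + g) * (1 - η) = g := by rw [mul_sub, hη, mul_one, add_sub_cancel_left]
  refine ⟨add_nonneg hf hg, η • u + (1 - η) • v, hU u hu v hv η ?_, ?_⟩
  · filter_upwards [nonneg_iff_ae.1 hf, nonneg_iff_ae.1 hg, AEEqFun.coeFn_add f g,
      mul_pointwiseInv_ae f (f + g)] with ω hf hg hadd hdiv
    rw [hdiv, hadd, Pi.add_apply]
    exact ⟨by positivity, div_le_one_of_le₀ (by linarith) (by linarith)⟩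
  · rw [smul_add, smul_smul, smul_smul, hη, hη']

theorem L0Balanced.abs_mul_mem_gaugeSet (hU : L0Balanced P U) {x : E} {f : Ω →ₘ[P] ℝ}
    (hf : f ∈ gaugeSet P U x) (η : Ω →ₘ[P] ℝ) : |η| * f ∈ gaugeSet P U (η • x) := by
  obtain ⟨hf, u, hu, rfl⟩ := hf
  let sign := η * pointwiseInv |η|
  have hsign : |η| * sign = η := by
    refine mul_mul_pointwiseInv_cancel ?_
    filter_upwards [AEEqFun.coeFn_abs η] with ω habs hzero
    rwa [habs, abs_eq_zero] at hzero
  refine ⟨nonneg_iff_ae.2 ?_, sign • u, hU u hu sign ?_, ?_⟩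
  · filter_upwards [nonneg_iff_ae.1 hf, AEEqFun.coeFn_mul |η| f, AEEqFun.coeFn_abs η]
      with ω hf hmul habs
    rw [hmul, Pi.mul_apply, habs]
    positivity
  · filter_upwards [mul_pointwiseInv_ae η |η|, AEEqFun.coeFn_abs η] with ω hdiv habs
    rw [hdiv, habs, abs_div, abs_abs]
    exact div_self_le_one _
  · rw [smul_smul, smul_smul, mul_right_comm, hsign]

variable [SFinite P]

theorem L0Absorbent.isGLB_l0Gauge (hU : L0Absorbent P U) (x : E) :
    IsGLB (gaugeSet P U x) (l0Gauge P U x) :=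
  have ⟨p, hp, _⟩ := exists_isGLB_ae_eq_iInf (hU.gaugeSet_nonempty x)
    ⟨0, zero_mem_lowerBounds_gaugeSet U x⟩
  Classical.epsilon_spec ⟨p, hp⟩

theorem L0Absorbent.exists_seq_l0Gauge_ae_eq_iInf (hU : L0Absorbent P U) (x : E) :
    ∃ s : ℕ → gaugeSet P U x, ∀ᵐ ω ∂P, l0Gauge P U x ω = ⨅ n, (s n : Ω →ₘ[P] ℝ) ω := by
  obtain ⟨p, hp, s, hs⟩ := exists_isGLB_ae_eq_iInf (hU.gaugeSet_nonempty x)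
    ⟨0, zero_mem_lowerBounds_gaugeSet U x⟩
  exact ⟨s, (hU.isGLB_l0Gauge x).unique hp ▸ hs⟩

theorem L0Absorbent.l0Gauge_nonneg (hU : L0Absorbent P U) (x : E) : 0 ≤ l0Gauge P U x :=
  (hU.isGLB_l0Gauge x).2 (zero_mem_lowerBounds_gaugeSet U x)

theorem L0Absorbent.l0Gauge_add_le (hU : L0Absorbent P U) (hconv : L0Convex P U) (x y : E) :
    l0Gauge P U (x + y) ≤ l0Gauge P U x + l0Gauge P U y := by
  refine ((hU.isGLB_l0Gauge x).add (hU.isGLB_l0Gauge y)).mono (hU.isGLB_l0Gauge (x + y)) ?_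
  rintro _ ⟨f, hf, g, hg, rfl⟩
  exact hconv.add_mem_gaugeSet hf hg

theorem L0Absorbent.l0Gauge_smul_le (hU : L0Absorbent P U) (hbal : L0Balanced P U)
    (η : Ω →ₘ[P] ℝ) (x : E) : ∀ᵐ ω ∂P, l0Gauge P U (η • x) ω ≤ |η ω| * l0Gauge P U x ω := by
  obtain ⟨s, hs⟩ := hU.exists_seq_l0Gauge_ae_eq_iInf x
  have hle : ∀ᵐ ω ∂P, ∀ n, l0Gauge P U (η • x) ω ≤ (|η| * s n) ω := ae_all_iff.2 fun n =>
    AEEqFun.coeFn_le.2 ((hU.isGLB_l0Gauge _).1 (hbal.abs_mul_mem_gaugeSet (s n).2 η))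
  filter_upwards [hs, hle, ae_all_iff.2 fun n => AEEqFun.coeFn_mul |η| (s n),
    AEEqFun.coeFn_abs η] with ω hs hle hmul habs
  rw [hs, Real.mul_iInf_of_nonneg (abs_nonneg _)]
  refine le_ciInf fun n => ?_
  simpa only [hmul, Pi.mul_apply, habs] using hle n

theorem L0Absorbent.isL0Seminorm_l0Gauge (hU : L0Absorbent P U) (hconv : L0Convex P U)
    (hbal : L0Balanced P U) : IsL0Seminorm P (l0Gauge P U) := by
  refine isL0Seminorm_of_smul_le (fun x => nonneg_iff_ae.1 (hU.l0Gauge_nonneg x))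
    (fun x y => ?_) (hU.l0Gauge_smul_le hbal)
  filter_upwards [AEEqFun.coeFn_le.2 (hU.l0Gauge_add_le hconv x y),
    AEEqFun.coeFn_add (l0Gauge P U x) (l0Gauge P U y)] with ω hle hadd
  exact hle.trans_eq hadd

theorem L0Absorbent.l0Gauge_le_one (hU : L0Absorbent P U) {x : E} (hx : x ∈ U) :
    ∀ᵐ ω ∂P, l0Gauge P U x ω ≤ 1 := by
  filter_upwards [AEEqFun.coeFn_le.2 ((hU.isGLB_l0Gauge x).1 (one_mem_gaugeSet hx)),
    AEEqFun.coeFn_one (β := ℝ) (μ := P)] with ω hle hone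
  exact hle.trans_eq hone

theorem L0Absorbent.mem_of_l0Gauge_lt_one (hU : L0Absorbent P U) (hbal : L0Balanced P U)
    (hstab : IsStableSet P U) {x : E} (hx : ∀ᵐ ω ∂P, l0Gauge P U x ω < 1) : x ∈ U := by
  obtain ⟨s, hs⟩ := hU.exists_seq_l0Gauge_ae_eq_iInf x
  have hcover : ∀ᵐ ω ∂P, ∃ k, ω ∈ {ω | (s k : Ω →ₘ[P] ℝ) ω < 1} := by
    filter_upwards [hx, hs] with ω hx hs
    exact exists_lt_of_ciInf_lt (hs ▸ hx)
  obtain ⟨A, hA, hAs⟩ := exists_isPartition_ae_subset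
    (fun k => measurableSet_lt (s k : Ω →ₘ[P] ℝ).measurable measurable_const) hcover
  choose u hu hxu using fun k => (s k).2.2
  refine hstab A hA (fun k => (ind P (A k) * s k) • u k) (fun k => hbal _ (hu k) _ ?_) x
    fun k => ?_
  · filter_upwards [hAs, AEEqFun.coeFn_mul (ind P (A k)) (s k), ind_ae (hA.1 k),
      nonneg_iff_ae.1 (s k).2.1] with ω hlt hmul hind hnonneg
    rw [hmul, Pi.mul_apply, hind]
    by_cases hω : ω ∈ A k
    · simpa [hω, abs_of_nonneg hnonneg] using (hlt k hω).le
    · simp [hω]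
  · rw [mul_smul, ← hxu k, smul_smul, ind_mul_ind (hA.1 k)]

end Gauge

section StableBalls

variable {Ω : Type*} [MeasurableSpace Ω] {P : Measure Ω}
  {E : Type*} {A : ℕ → Set Ω} {Fam : ℕ → Set (E → Ω →ₘ[P] ℝ)} {ε : Ω →ₘ[P] ℝ}

theorem mem_stableBall_iff (hF : ∀ k, (Fam k).Countable) {x : E} :
    x ∈ stableBall P A Fam ε ↔ ∀ k, ∀ n ∈ Fam k, ∀ᵐ ω ∂P, ω ∈ A k → n x ω ≤ ε ω := by
  simp only [stableBall, Set.mem_ofPred_eq, ae_all_iff, ← ae_ball_iff (hF _)]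
  exact forall_congr' fun k => eventually_congr <| .of_forall fun ω => by tauto

variable (P) in
/-- The stable balls `U_{{F_k},{A_k},ε}` of a family `𝒮` of `L⁰`-seminorms, which form a
neighborhood base of `0` for the topology stably induced by `𝒮`. -/
def stableBalls (𝒮 : Set (E → Ω →ₘ[P] ℝ)) : Set (Set E) :=
  {U | ∃ (A : ℕ → Set Ω) (Fam : ℕ → Set (E → Ω →ₘ[P] ℝ)) (ε : Ω →ₘ[P] ℝ),
    IsPartition A ∧ (∀ k, (Fam k).Finite ∧ (Fam k).Nonempty ∧ Fam k ⊆ 𝒮) ∧ L0pos P ε ∧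
    stableBall P A Fam ε = U}

variable [AddCommGroup E]

theorem stablyInduced_iff {T : TopologicalSpace E} {𝒮 : Set (E → Ω →ₘ[P] ℝ)} :
    StablyInduced P 𝒮 T ↔ (∀ U ∈ stableBalls P 𝒮, U ∈ @nhds E T 0) ∧
      ∀ V ∈ @nhds E T 0, ∃ U ∈ stableBalls P 𝒮, U ⊆ V := by
  refine and_congr ⟨?_, ?_⟩ (forall₂_congr fun _ _ => ⟨?_, ?_⟩)
  · rintro h _ ⟨A, Fam, ε, hA, hF, hε, rfl⟩
    exact h A Fam ε hA hF hε
  · exact fun h A Fam ε hA hF hε => h _ ⟨A, Fam, ε, hA, hF, hε, rfl⟩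
  · rintro ⟨A, Fam, ε, hA, hF, hε, hsub⟩
    exact ⟨_, ⟨A, Fam, ε, hA, hF, hε, rfl⟩, hsub⟩
  · rintro ⟨_, ⟨A, Fam, ε, hA, hF, hε, rfl⟩, hsub⟩
    exact ⟨A, Fam, ε, hA, hF, hε, hsub⟩

variable [Module (Ω →ₘ[P] ℝ) E]

theorem l0Convex_stableBall (hF : ∀ k, (Fam k).Countable)
    (hn : ∀ k, ∀ n ∈ Fam k, IsL0Seminorm P n) : L0Convex P (stableBall P A Fam ε) := by
  intro x hx y hy η hη
  rw [mem_stableBall_iff hF] at hx hy ⊢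
  intro k n hnk
  obtain ⟨-, hsmul, hadd⟩ := hn k n hnk
  filter_upwards [hx k n hnk, hy k n hnk, hη, hadd (η • x) ((1 - η) • y), hsmul η x,
    hsmul (1 - η) y, AEEqFun.coeFn_sub 1 η, AEEqFun.coeFn_one (β := ℝ) (μ := P)]
    with ω hx hy ⟨hη0, hη1⟩ hadd hηx hηy hsub hone hω
  rw [hsub, Pi.sub_apply, hone, Pi.one_apply, abs_of_nonneg (sub_nonneg.2 hη1)] at hηy
  rw [abs_of_nonneg hη0] at hηx
  calc n (η • x + (1 - η) • y) ω ≤ η ω * n x ω + (1 - η ω) * n y ω := hηx ▸ hηy ▸ hadd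
    _ ≤ η ω * ε ω + (1 - η ω) * ε ω := by
        gcongr
        exacts [hx hω, hy hω]
    _ = ε ω := by ring

theorem l0Balanced_stableBall (hF : ∀ k, (Fam k).Countable)
    (hn : ∀ k, ∀ n ∈ Fam k, IsL0Seminorm P n) : L0Balanced P (stableBall P A Fam ε) := by
  intro x hx η hη
  rw [mem_stableBall_iff hF] at hx ⊢
  intro k n hnk
  obtain ⟨hnonneg, hsmul, -⟩ := hn k n hnk
  filter_upwards [hx k n hnk, hη, hsmul η x, hnonneg x] with ω hx hη hsmul hnonneg hω
  exact hsmul.trans_le ((mul_le_of_le_one_left hnonneg hη).trans (hx hω))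

theorem isStableSet_stableBall (hF : ∀ k, (Fam k).Countable)
    (hn : ∀ k, ∀ n ∈ Fam k, IsL0Seminorm P n) : IsStableSet P (stableBall P A Fam ε) := by
  intro B hB x hx z hz
  rw [mem_stableBall_iff hF]
  intro k n hnk
  filter_upwards [ae_all_iff.2 fun j => (mem_stableBall_iff hF).1 (hx j) k n hnk,
    ae_all_iff.2 fun j => (hn k n hnk).ae_eq_on (hB.1 j) (hz j)] with ω hx hzx hω
  obtain ⟨j, hj⟩ := hB.exists_mem ω
  exact (hzx j hj).trans_le (hx j hω)

theorem concatSet_stableBall (hA : IsPartition A) {B : ℕ → ℕ → Set Ω}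
    {Fam : ℕ → ℕ → Set (E → Ω →ₘ[P] ℝ)} {e : ℕ → Ω →ₘ[P] ℝ}
    (hF : ∀ k j, (Fam k j).Countable) (hn : ∀ k j, ∀ n ∈ Fam k j, IsL0Seminorm P n)
    (he : ∀ k, L0pos P (e k)) (hε : ∀ᵐ ω ∂P, ∀ k, ω ∈ A k → ε ω = e k ω) :
    concatSet P A (fun k => stableBall P (B k) (Fam k) (e k)) =
      stableBall P (fun m => A m.unpair.1 ∩ B m.unpair.1 m.unpair.2)
        (fun m => Fam m.unpair.1 m.unpair.2) ε := by
  ext x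
  rw [mem_stableBall_iff fun m => hF _ _]
  refine ⟨fun hx m n hnm => ?_, fun hx k => ⟨ind P (A k) • x, ?_, ?_⟩⟩
  · obtain ⟨u, hu, hxu⟩ := hx m.unpair.1
    filter_upwards [(mem_stableBall_iff (hF _)).1 hu _ n hnm, hε,
      (hn _ _ n hnm).ae_eq_on (hA.1 _) hxu] with ω hu hε hxu hω
    rw [hε _ hω.1, hxu hω.1]
    exact hu hω.2
  · rw [mem_stableBall_iff (hF k)]
    intro j n hnj
    have hxkj := hx (Nat.pair k j)
    simp only [Nat.unpair_pair] at hxkj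
    filter_upwards [hxkj n hnj, (hn k j n hnj).2.1 (ind P (A k)) x, ind_ae (hA.1 k), he k, hε]
      with ω hx hsmul hind hpos hε hω
    by_cases hk : ω ∈ A k
    · simpa [hsmul, hind, hk, ← hε k hk] using hx ⟨hk, hω⟩
    · simpa [hsmul, hind, hk] using hpos.le
  · rw [smul_smul, ind_mul_ind (hA.1 k)]

theorem mem_stableBall_of_pointwiseInv_smul_mem_concatSet (hA : IsPartition A)
    (hF : ∀ k, (Fam k).Countable) (hn : ∀ k, ∀ n ∈ Fam k, IsL0Seminorm P n) (hε : L0pos P ε)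
    {V : ℕ → Set E} (hV : ∀ k, ∀ n ∈ Fam k, ∀ v ∈ V k, ∀ᵐ ω ∂P, n v ω ≤ 1) {x : E}
    (hx : pointwiseInv ε • x ∈ concatSet P A V) : x ∈ stableBall P A Fam ε := by
  rw [mem_stableBall_iff hF]
  intro k n hnk
  obtain ⟨v, hv, hxv⟩ := hx k
  filter_upwards [hV k n hnk v hv, (hn k n hnk).ae_eq_on (hA.1 k) hxv,
    (hn k n hnk).2.1 (pointwiseInv ε) x, pointwiseInv_ae ε, hε] with ω hv hxv hsmul hinv hpos hω
  rw [← hxv hω, hsmul, hinv, abs_of_pos (inv_pos.2 hpos), inv_mul_le_iff₀ hpos, mul_one] at hv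
  exact hv

end StableBalls

section Topology

variable {Ω : Type*} [MeasurableSpace Ω] {P : Measure Ω}
  {E : Type*} [AddCommGroup E] [Module (Ω →ₘ[P] ℝ) E] {T : TopologicalSpace E}

theorem exists_l0pos_l0ball_subset_of_mem_nhds {η : Ω →ₘ[P] ℝ} {V : Set (Ω →ₘ[P] ℝ)}
    (hV : V ∈ @nhds _ (L0Topology P) η) : ∃ ε, L0pos P ε ∧ L0ball P η ε ⊆ V := by
  obtain ⟨O, hOV, hO, hηO⟩ := (@mem_nhds_iff _ (L0Topology P) _ _).1 hV
  obtain ⟨ε, hε, hball⟩ := hO η hηO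
  exact ⟨ε, hε, hball.trans hOV⟩

theorem l0Absorbent_of_mem_nhds
    (hsmul : ∀ x : E, @Continuous _ _ (L0Topology P) T fun η : Ω →ₘ[P] ℝ => η • x) {U : Set E}
    (hU : U ∈ @nhds E T 0) : L0Absorbent P U := by
  intro x
  have hpre : (fun η : Ω →ₘ[P] ℝ => η • x) ⁻¹' U ∈ @nhds _ (L0Topology P) 0 :=
    @Continuous.tendsto' _ _ (L0Topology P) T _ (hsmul x) 0 0 (zero_smul _ x) _ hU
  obtain ⟨ε, hε, hball⟩ := exists_l0pos_l0ball_subset_of_mem_nhds hpre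
  have hεx : ε • x ∈ U := by
    refine hball ?_
    filter_upwards [hε, AEEqFun.coeFn_zero (β := ℝ) (μ := P)] with ω hpos hzero
    rw [hzero, Pi.zero_apply, sub_zero, abs_of_pos hpos]
  have hinv : ε * (1 * pointwiseInv ε) = 1 :=
    mul_mul_pointwiseInv_cancel (hε.mono fun ω hpos hzero => absurd hzero hpos.ne')
  refine ⟨pointwiseInv ε, ?_, ε • x, hεx, ?_⟩
  · filter_upwards [hε, pointwiseInv_ae ε] with ω hpos hinv
    exact hinv ▸ inv_pos.2 hpos
  · rw [smul_smul, mul_comm, ← one_mul (pointwiseInv ε), hinv, one_smul]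

theorem convex_balanced_stable_of_mem_stableBalls {𝒮 : Set (E → Ω →ₘ[P] ℝ)}
    (h𝒮 : ∀ n ∈ 𝒮, IsL0Seminorm P n) {U : Set E} (hU : U ∈ stableBalls P 𝒮) :
    L0Convex P U ∧ L0Balanced P U ∧ IsStableSet P U := by
  obtain ⟨A, Fam, ε, -, hF, -, rfl⟩ := hU
  have hcount (k : ℕ) : (Fam k).Countable := (hF k).1.countable
  have hn (k : ℕ) : ∀ n ∈ Fam k, IsL0Seminorm P n := fun n hnk => h𝒮 n ((hF k).2.2 hnk)
  exact ⟨l0Convex_stableBall hcount hn, l0Balanced_stableBall hcount hn,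
    isStableSet_stableBall hcount hn⟩

theorem concatSet_mem_stableBalls {𝒮 : Set (E → Ω →ₘ[P] ℝ)} (h𝒮 : ∀ n ∈ 𝒮, IsL0Seminorm P n)
    {A : ℕ → Set Ω} (hA : IsPartition A) {U : ℕ → Set E} (hU : ∀ k, U k ∈ stableBalls P 𝒮) :
    concatSet P A U ∈ stableBalls P 𝒮 := by
  choose B Fam e hB hF he hUeq using hU
  obtain ⟨ε, hε⟩ := hA.exists_concat e
  refine ⟨_, _, ε, hA.inter_unpair hB, fun m => hF m.unpair.1 m.unpair.2, ?_, ?_⟩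
  · filter_upwards [hε, ae_all_iff.2 he] with ω hε hpos
    obtain ⟨k, hk⟩ := hA.exists_mem ω
    exact hε k hk ▸ hpos k
  · rw [← concatSet_stableBall hA (fun k j => (hF k j).1.countable)
      (fun k j n hn => h𝒮 n ((hF k j).2.2 hn)) he hε, funext hUeq]

variable [SFinite P] {𝒰 : Set (Set E)}

theorem exists_forall_l0Gauge_le_one (hnhds : ∀ U ∈ 𝒰, U ∈ @nhds E T 0)
    (hbase : ∀ V ∈ @nhds E T 0, ∃ U ∈ 𝒰, U ⊆ V) (habs : ∀ U ∈ 𝒰, L0Absorbent P U)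
    {F : Set (E → Ω →ₘ[P] ℝ)} (hfin : F.Finite) (hF : F ⊆ l0Gauge P '' 𝒰) :
    ∃ V ∈ 𝒰, ∀ n ∈ F, ∀ v ∈ V, ∀ᵐ ω ∂P, n v ω ≤ 1 := by
  have hmem : ⋂ n ∈ F, {x : E | ∀ᵐ ω ∂P, n x ω ≤ 1} ∈ @nhds E T 0 := by
    refine (biInter_mem hfin).2 fun n hn => ?_
    obtain ⟨U, hU, rfl⟩ := hF hn
    exact mem_of_superset (hnhds U hU) fun x => (habs U hU).l0Gauge_le_one
  obtain ⟨V, hV, hsub⟩ := hbase _ hmem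
  exact ⟨V, hV, fun n hn v hv => Set.mem_iInter₂.1 (hsub hv) n hn⟩

theorem mem_nhds_of_mem_stableBalls_l0Gauge
    (hconst : @ContinuousConstSMul (Ω →ₘ[P] ℝ) E T _) (hnhds : ∀ U ∈ 𝒰, U ∈ @nhds E T 0)
    (hbase : ∀ V ∈ @nhds E T 0, ∃ U ∈ 𝒰, U ⊆ V) (habs : ∀ U ∈ 𝒰, L0Absorbent P U)
    (hsemi : ∀ U ∈ 𝒰, IsL0Seminorm P (l0Gauge P U))
    (hconcat : ∀ A : ℕ → Set Ω, IsPartition A → ∀ V : ℕ → Set E, (∀ k, V k ∈ 𝒰) →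
      concatSet P A V ∈ 𝒰) {W : Set E} (hW : W ∈ stableBalls P (l0Gauge P '' 𝒰)) :
    W ∈ @nhds E T 0 := by
  obtain ⟨A, Fam, ε, hA, hF, hε, rfl⟩ := hW
  choose V hV𝒰 hV using fun k =>
    exists_forall_l0Gauge_le_one hnhds hbase habs (hF k).1 (hF k).2.2
  have hpre : (fun x : E => pointwiseInv ε • x) ⁻¹' concatSet P A V ∈ @nhds E T 0 :=
    (continuous_const_smul (pointwiseInv ε)).tendsto' 0 0 (smul_zero _)
      (hnhds _ (hconcat A hA V hV𝒰))
  refine mem_of_superset hpre fun x => mem_stableBall_of_pointwiseInv_smul_mem_concatSet hA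
    (fun k => (hF k).1.countable) (fun k n hn => ?_) hε hV
  obtain ⟨U, hU, rfl⟩ := (hF k).2.2 hn
  exact hsemi U hU

theorem exists_mem_stableBalls_l0Gauge_subset {U : Set E} (hU : U ∈ 𝒰) (habs : L0Absorbent P U)
    (hbal : L0Balanced P U) (hstab : IsStableSet P U) :
    ∃ W ∈ stableBalls P (l0Gauge P '' 𝒰), W ⊆ U := by
  have hA : IsPartition (disjointed fun _ : ℕ => (Set.univ : Set Ω)) :=
    isPartition_disjointed (fun _ => .univ) (Set.iUnion_const _)
  have hhalf : ∀ᵐ ω ∂P, AEEqFun.const (μ := P) Ω (1 / 2 : ℝ) ω = 1 / 2 :=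
    AEEqFun.coeFn_const Ω _
  refine ⟨_, ⟨_, fun _ => {l0Gauge P U}, AEEqFun.const Ω (1 / 2 : ℝ), hA, fun k =>
    ⟨Set.finite_singleton _, Set.singleton_nonempty _, Set.singleton_subset_iff.2 ⟨U, hU, rfl⟩⟩,
    ?_, rfl⟩, fun x hx => habs.mem_of_l0Gauge_lt_one hbal hstab ?_⟩
  · filter_upwards [hhalf] with ω hω
    rw [hω]
    exact one_half_pos
  · filter_upwards [hx, hhalf] with ω hx hω
    obtain ⟨k, hk⟩ := hA.exists_mem ω
    exact (hω ▸ hx k hk _ rfl).trans_lt one_half_lt_one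

end Topology

end L0Module

theorem stmt_0_general {Ω : Type*} [MeasurableSpace Ω] (P : Measure Ω) [SFinite P]
    (E : Type*) [AddCommGroup E] [Module (Ω →ₘ[P] ℝ) E] (T : TopologicalSpace E)
    (hconst : @ContinuousConstSMul (Ω →ₘ[P] ℝ) E T _)
    (hsmul : ∀ x : E, @Continuous _ _ (L0Topology P) T fun η : Ω →ₘ[P] ℝ => η • x) :
    (∃ 𝒮 : Set (E → Ω →ₘ[P] ℝ), (∀ n ∈ 𝒮, IsL0Seminorm P n) ∧ StablyInduced P 𝒮 T) ↔
      ∃ 𝒰 : Set (Set E),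
        (∀ U ∈ 𝒰, U ∈ @nhds E T 0) ∧
        (∀ V : Set E, V ∈ @nhds E T 0 → ∃ U ∈ 𝒰, U ⊆ V) ∧
        (∀ U ∈ 𝒰, L0Convex P U ∧ L0Absorbent P U ∧ L0Balanced P U ∧ IsStableSet P U) ∧
        (∀ A : ℕ → Set Ω, IsPartition A → ∀ Us : ℕ → Set E, (∀ k, Us k ∈ 𝒰) →
          concatSet P A Us ∈ 𝒰) := by
  constructor
  · rintro ⟨𝒮, h𝒮, hind⟩
    obtain ⟨hnhds, hbase⟩ := stablyInduced_iff.1 hind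
    refine ⟨stableBalls P 𝒮, hnhds, hbase, fun U hU => ?_,
      fun A hA Us hUs => concatSet_mem_stableBalls h𝒮 hA hUs⟩
    obtain ⟨hconv, hbal, hstab⟩ := convex_balanced_stable_of_mem_stableBalls h𝒮 hU
    exact ⟨hconv, l0Absorbent_of_mem_nhds hsmul (hnhds U hU), hbal, hstab⟩
  · rintro ⟨𝒰, hnhds, hbase, hprop, hconcat⟩
    have habs (U) (hU : U ∈ 𝒰) : L0Absorbent P U := (hprop U hU).2.1
    have hsemi (U) (hU : U ∈ 𝒰) : IsL0Seminorm P (l0Gauge P U) :=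
      (habs U hU).isL0Seminorm_l0Gauge (hprop U hU).1 (hprop U hU).2.2.1
    refine ⟨l0Gauge P '' 𝒰, Set.forall_mem_image.2 hsemi, stablyInduced_iff.2 ⟨fun W =>
      mem_nhds_of_mem_stableBalls_l0Gauge hconst hnhds hbase habs hsemi hconcat,
      fun V hV => ?_⟩⟩
    obtain ⟨U, hU, hUV⟩ := hbase V hV
    obtain ⟨-, -, hbal, hstab⟩ := hprop U hU
    obtain ⟨W, hW, hWU⟩ := exists_mem_stableBalls_l0Gauge_subset hU (habs U hU) hbal hstab
    exact ⟨W, hW, hWU.trans hUV⟩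

/-- Let `E` be a stable `L⁰(F)`-module and `𝒯` a topology making `E[𝒯]` a
topological `L⁰`-module. Then `𝒯` is stably induced by some family of `L⁰`-seminorms iff
there is a neighborhood base `𝒰` of `0 ∈ E` for `𝒯` such that (1) every `U ∈ 𝒰` is
`L⁰`-convex, `L⁰`-absorbent, `L⁰`-balanced and stable, and (2) for every partition `{A_k}`
and every sequence `{U_k} ⊆ 𝒰` one has `Σ_k 1_{A_k} U_k ∈ 𝒰`. -/
theorem stmt_0 {Ω : Type*} [MeasurableSpace Ω] (P : MeasureTheory.Measure Ω)
    [MeasureTheory.IsProbabilityMeasure P]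
    (E : Type*) [AddCommGroup E] [Module (Ω →ₘ[P] ℝ) E]
    (hstable : IsStableModule P E)
    (T : TopologicalSpace E)
    (hadd : @ContinuousAdd E T _)
    (hsmul : @ContinuousSMul (Ω →ₘ[P] ℝ) E _ (L0Topology P) T) :
    (∃ 𝒮 : Set (E → Ω →ₘ[P] ℝ), (∀ n ∈ 𝒮, IsL0Seminorm P n) ∧ StablyInduced P 𝒮 T) ↔
      ∃ 𝒰 : Set (Set E),
        (∀ U ∈ 𝒰, U ∈ @nhds E T 0) ∧
        (∀ V : Set E, V ∈ @nhds E T 0 → ∃ U ∈ 𝒰, U ⊆ V) ∧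
        (∀ U ∈ 𝒰, L0Convex P U ∧ L0Absorbent P U ∧ L0Balanced P U ∧ IsStableSet P U) ∧
        (∀ A : ℕ → Set Ω, IsPartition A → ∀ Us : ℕ → Set E, (∀ k, Us k ∈ 𝒰) →
          concatSet P A Us ∈ 𝒰) := by
  let := L0Topology P
  exact stmt_0_general P E T ContinuousSMul.continuousConstSMul
    fun x => continuous_id.smul continuous_const
end

section
/- Let E[𝒯] be a topological L^0(F)-module whose topology 𝒯 is stable. Then the topological dual E* := {μ : E → L^0(F) : μ is L^0(F)-linear and continuous} is closed under countable concatenations: for every sequence {μ_k} of continuous L^0(F)-linear maps E → L^0(F) and every partition {A_k} of Ω, the map μ : E → L^0(F) defined by μ(x) := Σ_k 1_{A_k}·μ_k(x) (the element of L^0(F) agreeing a.e. on each A_k with μ_k(x)) is L^0(F)-linear and continuous. -/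
open MeasureTheory Filter

open L0Module

/-!
Near `x`, the map `μ = Σ_k 1_{A_k} μ_k` is controlled by the concatenation `Σ_k 1_{A_k} U_k` of the
neighbourhoods `U_k = {y : |μ_k y - μ_k x| < ε}`. If `1_{A_k} y = 1_{A_k} u_k` with `u_k ∈ U_k`,
then `1_{A_k} μ y = μ_k (1_{A_k} u_k)`, so `|μ y - μ x| ≤ ε` holds on each `A_k`, hence almost
surely. Stability of the topology says exactly that this concatenation of neighbourhoods is
open.
-/

open scoped Topology

namespace L0Module

variable {Ω ι : Type*} [MeasurableSpace Ω] {P : Measure Ω}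

theorem ae_of_forall_ae_mem_imp [Countable ι] {A : ι → Set Ω} (hcover : ⋃ i, A i = Set.univ)
    {p : Ω → Prop} (h : ∀ i, ∀ᵐ ω ∂P, ω ∈ A i → p ω) : ∀ᵐ ω ∂P, p ω := by
  filter_upwards [ae_all_iff.2 h] with ω hω
  obtain ⟨i, hi⟩ := Set.iUnion_eq_univ_iff.1 hcover ω
  exact hω i hi

section Indicator

theorem coeFn_ind {A : Set Ω} (hA : MeasurableSet A) :
    ind P A =ᵐ[P] A.indicator fun _ => (1 : ℝ) := by
  rw [ind, dif_pos hA]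
  exact AEEqFun.coeFn_mk _ _

theorem ind_mul_eq_ind_mul_iff {A : Set Ω} (hA : MeasurableSet A) {ξ η : Ω →ₘ[P] ℝ} :
    ind P A * ξ = ind P A * η ↔ ∀ᵐ ω ∂P, ω ∈ A → ξ ω = η ω := by
  rw [AEEqFun.ext_iff]
  refine eventually_congr ?_
  filter_upwards [coeFn_ind (P := P) hA, AEEqFun.coeFn_mul (ind P A) ξ,
    AEEqFun.coeFn_mul (ind P A) η] with ω hind hξ hη
  by_cases hω : ω ∈ A <;> simp [hξ, hη, hind, hω]

end Indicator

section Concatenation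

variable {E : Type*} [AddCommGroup E] [Module (Ω →ₘ[P] ℝ) E]

variable (P) in
/-- `z` is a concatenation `Σ_i 1_{A_i} x_i`, in the sense that `1_{A_i} z = 1_{A_i} x_i` for all
`i`. As `E` need not be a stable module, concatenations may fail to exist or to be unique, so this
is a relation rather than an operation. -/
def IsConcat (A : ι → Set Ω) (x : ι → E) (z : E) : Prop :=
  ∀ i, ind P (A i) • z = ind P (A i) • x i

theorem mem_concatSet_iff {A : ℕ → Set Ω} {U : ℕ → Set E} {z : E} :
    z ∈ concatSet P A U ↔ ∃ u : ℕ → E, (∀ k, u k ∈ U k) ∧ IsConcat P A u z := by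
  simp only [concatSet, Set.mem_ofPred_eq, IsConcat, Classical.skolem, forall_and]

namespace IsConcat

variable {A : ι → Set Ω}

theorem const (z : E) : IsConcat P A (fun _ => z) z := fun _ => rfl

theorem add {x y : ι → E} {z w : E} (hz : IsConcat P A x z) (hw : IsConcat P A y w) :
    IsConcat P A (fun i => x i + y i) (z + w) := fun i => by
  rw [smul_add, smul_add, hz i, hw i]

theorem smul {x : ι → E} {z : E} (hz : IsConcat P A x z) (η : Ω →ₘ[P] ℝ) :
    IsConcat P A (fun i => η • x i) (η • z) := fun i => by
  rw [smul_comm, hz i, smul_comm]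

theorem map {F : Type*} [AddCommGroup F] [Module (Ω →ₘ[P] ℝ) F] {f : ι → E → F} {g : E → F}
    (hf : ∀ i x, f i (ind P (A i) • x) = ind P (A i) • f i x)
    (hg : ∀ x, IsConcat P A (fun i => f i x) (g x)) {x : ι → E} {z : E}
    (hz : IsConcat P A x z) : IsConcat P A (fun i => f i (x i)) (g z) := fun i => by
  rw [hg z i, ← hf, hz i, hf]

end IsConcat

variable {A : ι → Set Ω} {ξs : ι → Ω →ₘ[P] ℝ} {ξ η : Ω →ₘ[P] ℝ}

theorem isConcat_iff_ae_eq (hmeas : ∀ i, MeasurableSet (A i)) :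
    IsConcat P A ξs ξ ↔ ∀ i, ∀ᵐ ω ∂P, ω ∈ A i → ξ ω = ξs i ω :=
  forall_congr' fun i => ind_mul_eq_ind_mul_iff (hmeas i)

theorem IsConcat.unique [Countable ι] (hmeas : ∀ i, MeasurableSet (A i))
    (hcover : ⋃ i, A i = Set.univ) (hξ : IsConcat P A ξs ξ) (hη : IsConcat P A ξs η) : ξ = η := by
  refine AEEqFun.ext (ae_of_forall_ae_mem_imp hcover fun i => ?_)
  filter_upwards [(isConcat_iff_ae_eq hmeas).1 hξ i, (isConcat_iff_ae_eq hmeas).1 hη i]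
    with ω hξω hηω hω
  rw [hξω hω, hηω hω]

end Concatenation

section Ball

/-- The strict ball `{ξ : |ξ - η| < ε a.s.}` in `L⁰`, which unlike `L0ball` is open. -/
def L0openBall (η ε : Ω →ₘ[P] ℝ) : Set (Ω →ₘ[P] ℝ) :=
  {ξ | ∀ᵐ ω ∂P, |ξ ω - η ω| < ε ω}

theorem mem_L0openBall_iff {ξ η ε : Ω →ₘ[P] ℝ} :
    ξ ∈ L0openBall η ε ↔ ∀ᵐ ω ∂P, |ξ ω - η ω| < ε ω := Iff.rfl

theorem L0openBall_subset_L0ball (η ε : Ω →ₘ[P] ℝ) : L0openBall η ε ⊆ L0ball P η ε :=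
  fun _ hξ => (mem_L0openBall_iff.1 hξ).mono fun _ => le_of_lt

theorem self_mem_L0openBall {η ε : Ω →ₘ[P] ℝ} (hε : L0pos P ε) : η ∈ L0openBall η ε := by
  filter_upwards [hε] with ω hω
  simpa only [sub_self, abs_zero] using hω

theorem isOpen_L0openBall (η ε : Ω →ₘ[P] ℝ) : IsOpen[L0Topology P] (L0openBall η ε) := by
  intro ξ hξ
  let δ : Ω →ₘ[P] ℝ := (2⁻¹ : ℝ) • (ε - |ξ - η|)
  have coeFn_δ : ∀ᵐ ω ∂P, δ ω = 2⁻¹ * (ε ω - |ξ ω - η ω|) := by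
    filter_upwards [AEEqFun.coeFn_smul (2⁻¹ : ℝ) (ε - |ξ - η|), AEEqFun.coeFn_sub ε |ξ - η|,
      AEEqFun.coeFn_abs (ξ - η), AEEqFun.coeFn_sub ξ η] with ω hsmul hsub habs hsub'
    simp only [δ, hsmul, Pi.smul_apply, hsub, Pi.sub_apply, habs, hsub', smul_eq_mul]
  refine ⟨δ, ?_, fun ζ hζ => mem_L0openBall_iff.2 ?_⟩
  · filter_upwards [coeFn_δ, hξ] with ω hδ hξω
    linarith
  · filter_upwards [coeFn_δ, hξ, hζ] with ω hδ hξω hζω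
    linarith [abs_sub_le (ζ ω) (ξ ω) (η ω)]

theorem IsConcat.mem_L0ball [Countable ι] {A : ι → Set Ω} (hmeas : ∀ i, MeasurableSet (A i))
    (hcover : ⋃ i, A i = Set.univ) {ξs ηs : ι → Ω →ₘ[P] ℝ} {ξ η ε : Ω →ₘ[P] ℝ}
    (hξ : IsConcat P A ξs ξ) (hη : IsConcat P A ηs η) (hball : ∀ i, ξs i ∈ L0ball P (ηs i) ε) :
    ξ ∈ L0ball P η ε := by
  refine ae_of_forall_ae_mem_imp hcover fun i => ?_
  filter_upwards [(isConcat_iff_ae_eq hmeas).1 hξ i, (isConcat_iff_ae_eq hmeas).1 hη i, hball i]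
    with ω hξω hηω hballω hω
  rwa [hξω hω, hηω hω]

end Ball

theorem continuous_of_isConcat {E : Type*} [AddCommGroup E] [Module (Ω →ₘ[P] ℝ) E]
    [TopologicalSpace E] {A : ℕ → Set Ω} (hmeas : ∀ k, MeasurableSet (A k))
    (hcover : ⋃ k, A k = Set.univ)
    (hstable : ∀ O : ℕ → Set E, (∀ k, IsOpen (O k) ∧ (O k).Nonempty) → IsOpen (concatSet P A O))
    {μs : ℕ → E → Ω →ₘ[P] ℝ} {μ : E → Ω →ₘ[P] ℝ}
    (hμs_ind : ∀ k x, μs k (ind P (A k) • x) = ind P (A k) • μs k x)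
    (hμs_cont : ∀ k, Continuous[_, L0Topology P] (μs k))
    (hμ : ∀ x, IsConcat P A (fun k => μs k x) (μ x)) : Continuous[_, L0Topology P] μ := by
  refine @Continuous.mk _ _ _ (L0Topology P) _ fun O hO =>
    isOpen_iff_forall_mem_open.2 fun x hx => ?_
  obtain ⟨ε, hε, hball⟩ := hO (μ x) hx
  let U : ℕ → Set E := fun k => μs k ⁻¹' L0openBall (μs k x) ε
  have isOpen_U (k : ℕ) : IsOpen (U k) :=
    @Continuous.isOpen_preimage _ _ _ (L0Topology P) _ (hμs_cont k) _ (isOpen_L0openBall _ _)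
  have mem_U (k : ℕ) : x ∈ U k := self_mem_L0openBall hε
  refine ⟨concatSet P A U, fun y hy => hball ?_, hstable U fun k => ⟨isOpen_U k, x, mem_U k⟩,
    mem_concatSet_iff.2 ⟨fun _ => x, mem_U, .const x⟩⟩
  obtain ⟨u, hu, hy⟩ := mem_concatSet_iff.1 hy
  exact (hy.map hμs_ind hμ).mem_L0ball hmeas hcover (hμ x) fun k =>
    L0openBall_subset_L0ball _ _ (hu k)

end L0Module

theorem stmt_2_general {Ω : Type*} [MeasurableSpace Ω] {P : Measure Ω}
    {E : Type*} [AddCommGroup E] [Module (Ω →ₘ[P] ℝ) E] [TopologicalSpace E]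
    {A : ℕ → Set Ω} (hA : IsPartition A)
    (hstable : ∀ O : ℕ → Set E, (∀ k, IsOpen (O k) ∧ (O k).Nonempty) → IsOpen (concatSet P A O))
    {μs : ℕ → E → Ω →ₘ[P] ℝ}
    (hμs_add : ∀ k x y, μs k (x + y) = μs k x + μs k y)
    (hμs_smul : ∀ k (η : Ω →ₘ[P] ℝ) x, μs k (η • x) = η * μs k x)
    (hμs_cont : ∀ k, Continuous[_, L0Topology P] (μs k))
    {μ : E → Ω →ₘ[P] ℝ} (hμ : ∀ x k, ∀ᵐ ω ∂P, ω ∈ A k → μ x ω = μs k x ω) :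
    (∀ x y, μ (x + y) = μ x + μ y) ∧
    (∀ (η : Ω →ₘ[P] ℝ) x, μ (η • x) = η * μ x) ∧
    Continuous[_, L0Topology P] μ := by
  obtain ⟨hmeas, -, hcover⟩ := hA
  have hconcat (x : E) : IsConcat P A (fun k => μs k x) (μ x) :=
    (isConcat_iff_ae_eq hmeas).2 (hμ x)
  refine ⟨fun x y => ?_, fun η x => ?_, ?_⟩
  · have hxy := hconcat (x + y)
    simp only [hμs_add] at hxy
    exact hxy.unique hmeas hcover ((hconcat x).add (hconcat y))
  · have hηx := hconcat (η • x)
    simp only [hμs_smul] at hηx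
    exact hηx.unique hmeas hcover ((hconcat x).smul η)
  · exact continuous_of_isConcat hmeas hcover hstable (fun k => hμs_smul k _) hμs_cont hconcat

/-- Let `E[𝒯]` be a topological `L⁰(F)`-module whose topology `𝒯` is stable.
Then the topological dual is closed under countable concatenations: if `{μ_k}` are continuous
`L⁰`-linear maps `E → L⁰` and `{A_k}` is a partition, then the map `μ = Σ_k 1_{A_k}·μ_k`
(which agrees a.e. on each `A_k` with `μ_k`) is `L⁰`-linear and continuous. -/
theorem stmt_2 {Ω : Type*} [MeasurableSpace Ω] (P : MeasureTheory.Measure Ω)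
    [MeasureTheory.IsProbabilityMeasure P]
    (E : Type*) [AddCommGroup E] [Module (Ω →ₘ[P] ℝ) E]
    (T : TopologicalSpace E)
    (hadd : @ContinuousAdd E T _)
    (hsmul : @ContinuousSMul (Ω →ₘ[P] ℝ) E _ (L0Topology P) T)
    (hstabletop : ∀ A : ℕ → Set Ω, IsPartition A → ∀ O : ℕ → Set E,
      (∀ k, T.IsOpen (O k) ∧ (O k).Nonempty) → T.IsOpen (concatSet P A O))
    (μs : ℕ → E → Ω →ₘ[P] ℝ)
    (hμs_add : ∀ (k : ℕ) (x y : E), μs k (x + y) = μs k x + μs k y)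
    (hμs_smul : ∀ (k : ℕ) (η : Ω →ₘ[P] ℝ) (x : E), μs k (η • x) = η * μs k x)
    (hμs_cont : ∀ k : ℕ, @Continuous E (Ω →ₘ[P] ℝ) T (L0Topology P) (μs k))
    (A : ℕ → Set Ω) (hA : IsPartition A)
    (μ : E → Ω →ₘ[P] ℝ)
    (hμ : ∀ (x : E) (k : ℕ), ∀ᵐ ω ∂P, ω ∈ A k → μ x ω = μs k x ω) :
    (∀ x y : E, μ (x + y) = μ x + μ y) ∧
    (∀ (η : Ω →ₘ[P] ℝ) (x : E), μ (η • x) = η * μ x) ∧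
    @Continuous E (Ω →ₘ[P] ℝ) T (L0Topology P) μ := by
  exact stmt_2_general hA (hstabletop A hA) hμs_add hμs_smul hμs_cont hμ
end

section
/- Let ρ : L^∞_F(𝓔) → L^0(F) be a convex risk measure. Then its Fenchel conjugate ρ_0^* is local: for every y ∈ L^1(𝓔) and every A ∈ F, one has 1_A·ρ_0^*(y) = 1_A·ρ_0^*(1_A·y) P-a.s. (both sides are F-measurable extended-real-valued functions, with the convention 0·(±∞) = 0). -/
open MeasureTheory Filter

/-- `x ∈ L^∞(𝓔)`: an essentially bounded measurable random variable. -/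
def MemLinfty {Ω : Type*} [MeasurableSpace Ω] (P : Measure Ω) (x : Ω → ℝ) : Prop :=
  Measurable x ∧ ∃ C : ℝ, ∀ᵐ ω ∂P, |x ω| ≤ C

/-- `x ∈ L^∞_F(𝓔) = L⁰(F)·L^∞(𝓔)`: `x = η · x₀` a.e. for some `F`-measurable `η`
and essentially bounded `x₀ ∈ L^∞(𝓔)`. -/
def MemLinftyF {Ω : Type*} [MeasurableSpace Ω] (F : MeasurableSpace Ω) (P : Measure Ω)
    (x : Ω → ℝ) : Prop :=
  ∃ η x₀ : Ω → ℝ, Measurable[F] η ∧ MemLinfty P x₀ ∧ x =ᵐ[P] fun ω => η ω * x₀ ω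

/-- A (conditional) convex risk measure `ρ : L^∞_F(𝓔) → L⁰(F)`, represented as a map on
representatives which respects a.e. equality, takes `F`-measurable values on the domain
`L^∞_F(𝓔)`, and is monotone, `L⁰(F)`-cash-invariant and convex (with real coefficients). -/
structure IsCondRiskMeasure {Ω : Type*} [MeasurableSpace Ω] (F : MeasurableSpace Ω)
    (P : Measure Ω) (ρ : (Ω → ℝ) → Ω → ℝ) : Prop where
  respects_ae : ∀ x y : Ω → ℝ, MemLinftyF F P x → x =ᵐ[P] y → ρ x =ᵐ[P] ρ y
  measurable_val : ∀ x : Ω → ℝ, MemLinftyF F P x → Measurable[F] (ρ x)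
  mono : ∀ x y : Ω → ℝ, MemLinftyF F P x → MemLinftyF F P y → x ≤ᵐ[P] y → ρ y ≤ᵐ[P] ρ x
  cash : ∀ x η : Ω → ℝ, MemLinftyF F P x → Measurable[F] η →
    ρ (fun ω => x ω + η ω) =ᵐ[P] fun ω => ρ x ω - η ω
  convex : ∀ (x y : Ω → ℝ) (r : ℝ), MemLinftyF F P x → MemLinftyF F P y → 0 ≤ r → r ≤ 1 →
    ρ (fun ω => r * x ω + (1 - r) * y ω) ≤ᵐ[P] fun ω => r * ρ x ω + (1 - r) * ρ y ω

/-- `γ` is the least upper bound, with respect to the `P`-a.e. order on `F`-measurable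
extended-real-valued functions, of the set `S`. -/
def IsCondLUB {Ω : Type*} [MeasurableSpace Ω] (F : MeasurableSpace Ω) (P : Measure Ω)
    (S : Set (Ω → EReal)) (γ : Ω → EReal) : Prop :=
  Measurable[F] γ ∧ (∀ g ∈ S, g ≤ᵐ[P] γ) ∧
    ∀ γ' : Ω → EReal, Measurable[F] γ' → (∀ g ∈ S, g ≤ᵐ[P] γ') → γ ≤ᵐ[P] γ'

/-!
For each position `x` the penalty `ρ x` is the same in both conjugates, and
`E[x · 1_A y | F] = 1_A E[x · y | F]` since `A ∈ F`. Hence the two families whose suprema are taken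
agree on `A`, member by member. A conditional supremum on `A` only sees its family on `A`, because
an upper bound on `A` becomes an upper bound everywhere when it is set to `⊤` off `A`.
-/

/-- `γ` is the least upper bound of `S` among `F`-measurable functions, in the `μ`-a.e. order, for a
measure `μ` on a σ-algebra `𝓔` that may be larger than `F`. In `IsCondLUB`, by contrast, `F` is the
most recent σ-algebra in scope, so `Measure Ω` there stands for measures on `F` itself. The same
happens in `stmt_14`, which is thus the case `𝓔 = F`. -/
def IsAELUB {Ω : Type*} (F : MeasurableSpace Ω) {_ : MeasurableSpace Ω} (μ : Measure Ω)
    (S : Set (Ω → EReal)) (γ : Ω → EReal) : Prop :=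
  Measurable[F] γ ∧ (∀ g ∈ S, g ≤ᵐ[μ] γ) ∧
    ∀ δ : Ω → EReal, Measurable[F] δ → (∀ g ∈ S, g ≤ᵐ[μ] δ) → γ ≤ᵐ[μ] δ

/-- `γ` is the conditional Fenchel conjugate at `y` of a penalty `ρ` on a set `X` of positions: the
a.e. least upper bound of `E[x·y|F] − ρ(x)` over `x ∈ X`. It is a predicate on `γ`, which is
determined only up to a null set. The penalty may be infinite; the difference is always meaningful,
since the conditional expectation is finite. -/
def IsCondConjugate {Ω : Type*} (F : MeasurableSpace Ω) {_ : MeasurableSpace Ω} (μ : Measure Ω)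
    (X : Set (Ω → ℝ)) (ρ : (Ω → ℝ) → Ω → EReal) (y : Ω → ℝ) (γ : Ω → EReal) : Prop :=
  IsAELUB F μ {g | ∃ x ∈ X, g = fun ω => ((μ[fun ω' => x ω' * y ω' | F]) ω : EReal) - ρ x ω} γ

section

variable {Ω : Type*} {F mE : MeasurableSpace Ω} {μ : Measure Ω} {A : Set Ω}

theorem MemLinfty.integrable_mul {x y : Ω → ℝ} (hx : MemLinfty μ x) (hy : Integrable y μ) :
    Integrable (fun ω => x ω * y ω) μ := by
  obtain ⟨hx_meas, C, hC⟩ := hx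
  exact hy.bdd_mul hx_meas.aestronglyMeasurable hC

theorem condExp_mul_indicator_ae_eq_restrict (hF : F ≤ mE) (hA : MeasurableSet[F] A)
    {x y : Ω → ℝ} (hxy : Integrable (fun ω => x ω * y ω) μ) :
    μ[fun ω => x ω * A.indicator y ω | F] =ᵐ[μ.restrict A] μ[fun ω => x ω * y ω | F] := by
  simp_rw [← Set.indicator_mul_right]
  exact EventuallyEq.trans (ae_restrict_of_ae (condExp_indicator hxy hA))
    (indicator_ae_eq_restrict (hF A hA))

theorem IsAELUB.ae_le_restrict (hF : F ≤ mE) (hA : MeasurableSet[F] A) {S : Set (Ω → EReal)}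
    {γ δ : Ω → EReal} (hγ : IsAELUB F μ S γ) (hδ : Measurable[F] δ)
    (hSδ : ∀ g ∈ S, g ≤ᵐ[μ.restrict A] δ) : γ ≤ᵐ[μ.restrict A] δ := by
  classical
  have bound_piecewise : ∀ g ∈ S, g ≤ᵐ[μ] A.piecewise δ ⊤ := by
    intro g hg
    filter_upwards [(ae_restrict_iff' (hF A hA)).1 (hSδ g hg)] with ω hω
    by_cases hωA : ω ∈ A
    · simpa [hωA] using hω hωA
    · simp [hωA]
  have le_piecewise : γ ≤ᵐ[μ] A.piecewise δ ⊤ :=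
    hγ.2.2 _ (hδ.piecewise hA measurable_const) bound_piecewise
  exact EventuallyLE.trans_eq (ae_restrict_of_ae le_piecewise) (piecewise_ae_eq_restrict (hF A hA))

theorem IsCondConjugate.ae_le_restrict (hF : F ≤ mE) (hA : MeasurableSet[F] A)
    {X : Set (Ω → ℝ)} {ρ : (Ω → ℝ) → Ω → EReal} {y z : Ω → ℝ} {γ δ : Ω → EReal}
    (hγ : IsCondConjugate F μ X ρ y γ) (hδ : IsCondConjugate F μ X ρ z δ)
    (hyz : ∀ x ∈ X,
      μ[fun ω => x ω * y ω | F] ≤ᵐ[μ.restrict A] μ[fun ω => x ω * z ω | F]) :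
    γ ≤ᵐ[μ.restrict A] δ := by
  refine IsAELUB.ae_le_restrict hF hA hγ hδ.1 ?_
  rintro _ ⟨x, hx, rfl⟩
  filter_upwards [hyz x hx, ae_restrict_of_ae (hδ.2.1 _ ⟨x, hx, rfl⟩)] with ω hyzω hδω
  exact (EReal.sub_le_sub (EReal.coe_le_coe hyzω) le_rfl).trans hδω

end

theorem stmt_14_general {Ω : Type*} {F mE : MeasurableSpace Ω} (hF : F ≤ mE)
    {μ : Measure Ω} [SigmaFinite (μ.trim hF)] {X : Set (Ω → ℝ)} {ρ : (Ω → ℝ) → Ω → EReal}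
    {y : Ω → ℝ} (hXy : ∀ x ∈ X, Integrable (fun ω => x ω * y ω) μ)
    {A : Set Ω} (hA : MeasurableSet[F] A) {γ₁ γ₂ : Ω → EReal}
    (h₁ : IsCondConjugate F μ X ρ y γ₁) (h₂ : IsCondConjugate F μ X ρ (A.indicator y) γ₂) :
    ∀ᵐ ω ∂μ, ((A.indicator (fun _ => (1 : ℝ)) ω : ℝ) : EReal) * γ₁ ω =
      ((A.indicator (fun _ => (1 : ℝ)) ω : ℝ) : EReal) * γ₂ ω := by
  have condExp_eq : ∀ x ∈ X, μ[fun ω => x ω * A.indicator y ω | F]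
      =ᵐ[μ.restrict A] μ[fun ω => x ω * y ω | F] :=
    fun x hx => condExp_mul_indicator_ae_eq_restrict hF hA (hXy x hx)
  have eq_on_A : γ₁ =ᵐ[μ.restrict A] γ₂ :=
    (h₁.ae_le_restrict hF hA h₂ fun x hx => (condExp_eq x hx).symm.le).antisymm
      (h₂.ae_le_restrict hF hA h₁ fun x hx => (condExp_eq x hx).le)
  filter_upwards [(ae_restrict_iff' (hF A hA)).1 eq_on_A] with ω hω
  by_cases hωA : ω ∈ A
  · rw [hω hωA]
  · simp [hωA]

/-- The Fenchel conjugate `ρ₀^*` of a convex risk measure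
`ρ : L^∞_F(𝓔) → L⁰(F)` is local: for every `y ∈ L¹(𝓔)` and `A ∈ F`,
`1_A·ρ₀^*(y) = 1_A·ρ₀^*(1_A·y)` a.s. (as `F`-measurable extended-real functions, with the
convention `0·(±∞) = 0`). Here `γ₁` (resp. `γ₂`) denotes `ρ₀^*(y)` (resp. `ρ₀^*(1_A·y)`),
i.e. the least upper bound of `{E[x·y|F] − ρ(x) : x ∈ L^∞(𝓔)}` (resp. with `1_A·y`). -/
theorem stmt_14 {Ω : Type*} [mE : MeasurableSpace Ω] (F : MeasurableSpace Ω) (hF : F ≤ mE)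
    (P : Measure Ω) [IsProbabilityMeasure P] (ρ : (Ω → ℝ) → Ω → ℝ)
    (hρ : IsCondRiskMeasure F P ρ)
    (y : Ω → ℝ) (hy : Integrable y P) (A : Set Ω) (hA : MeasurableSet[F] A)
    (γ₁ γ₂ : Ω → EReal)
    (h₁ : IsCondLUB F P
      {g | ∃ x : Ω → ℝ, MemLinfty P x ∧
        g = fun ω => ((P[fun ω' => x ω' * y ω' | F]) ω : EReal) - (ρ x ω : EReal)} γ₁)
    (h₂ : IsCondLUB F P
      {g | ∃ x : Ω → ℝ, MemLinfty P x ∧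
        g = fun ω => ((P[fun ω' => x ω' * A.indicator y ω' | F]) ω : EReal) - (ρ x ω : EReal)}
      γ₂) :
    ∀ᵐ ω ∂P, ((A.indicator (fun _ => (1 : ℝ)) ω : ℝ) : EReal) * γ₁ ω =
      ((A.indicator (fun _ => (1 : ℝ)) ω : ℝ) : EReal) * γ₂ ω :=
  stmt_14_general le_rfl (X := {x | MemLinfty P x}) (ρ := fun x ω => (ρ x ω : EReal))
    (fun _ hx => hx.integrable_mul hy) hA h₁ h₂
end

section
/- Let {y_n}_{n≥1} be a sequence of real-valued F-measurable random variables on a probability space (Ω, F, P), and suppose limsup_n y_n = y P-a.s. for a real-valued F-measurable random variable y. Then there exists a sequence {ν_m}_{m≥1} of F-measurable ℕ-valued random variables with ν_m < ν_{m+1} P-a.s. for every m, such that the (F-measurable) random variables ω ↦ y_{ν_m(ω)}(ω) converge to y P-a.s. as m → ∞. -/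
open MeasureTheory Filter

/-!
The limsup of a sequence is one of its cluster points, so `y ω` is a cluster point of `yn · ω` for
almost every `ω`. The usual extraction of a convergent subsequence can be done measurably: let
`ν (m + 1) ω` be the first index after `ν m ω` that brings the sequence within `1 / (m + 2)` of
`y ω`, and the plain successor of `ν m ω` on the measurable set where such indices do not occur
infinitely often.
-/

theorem mapClusterPt_of_limsup_coe_eq {ι : Type*} {F : Filter ι} [F.NeBot] {u : ι → ℝ} {a : ℝ}
    (h : limsup (fun i => (u i : EReal)) F = a) : MapClusterPt a F u := by
  have cluster_coe : MapClusterPt (a : EReal) F (fun i => (u i : EReal)) := h ▸ MapClusterPt.limsup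
  exact EReal.isEmbedding_coe.isInducing.mapClusterPt_iff.1 cluster_coe

section MeasurableSelection

variable {Ω : Type*} [MeasurableSpace Ω]

theorem exists_measurable_gt_mem_of_frequently {s : ℕ → Set Ω} (hs : ∀ n, MeasurableSet (s n))
    {f : Ω → ℕ} (hf : Measurable f) :
    ∃ g : Ω → ℕ, Measurable g ∧ (∀ ω, f ω < g ω) ∧
      ∀ ω, (∃ᶠ n in atTop, ω ∈ s n) → ω ∈ s (g ω) := by
  classical
  have exists_next (ω : Ω) : ∃ n, f ω < n ∧ (ω ∈ limsup s atTop → ω ∈ s n) := by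
    by_cases hω : ω ∈ limsup s atTop
    · obtain ⟨n, hn, hfn⟩ :=
        ((mem_limsup_iff_frequently_mem.1 hω).and_eventually (eventually_gt_atTop (f ω))).exists
      exact ⟨n, hfn, fun _ => hn⟩
    · exact ⟨f ω + 1, Nat.lt_succ_self _, fun h => absurd h hω⟩
  have measurable_next (n : ℕ) :
      MeasurableSet {ω | f ω < n ∧ (ω ∈ limsup s atTop → ω ∈ s n)} :=
    (measurableSet_lt hf measurable_const).inter
      ((MeasurableSet.measurableSet_limsup hs).imp (hs n))
  exact ⟨fun ω => Nat.find (exists_next ω), measurable_find exists_next measurable_next,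
    fun ω => (Nat.find_spec (exists_next ω)).1,
    fun ω hω => (Nat.find_spec (exists_next ω)).2 (mem_limsup_iff_frequently_mem.2 hω)⟩

theorem exists_measurable_strictMono_mem_of_frequently {s : ℕ → ℕ → Set Ω}
    (hs : ∀ m n, MeasurableSet (s m n)) :
    ∃ ν : ℕ → Ω → ℕ, (∀ m, Measurable (ν m)) ∧ (∀ ω, StrictMono (ν · ω)) ∧
      ∀ m ω, (∃ᶠ n in atTop, ω ∈ s m n) → ω ∈ s m (ν m ω) := by
  choose next next_measurable lt_next mem_next using
    fun m (f : {f : Ω → ℕ // Measurable f}) =>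
      exists_measurable_gt_mem_of_frequently (hs m) f.2
  let ν : ℕ → {f : Ω → ℕ // Measurable f} :=
    Nat.rec ⟨next 0 ⟨0, measurable_zero⟩, next_measurable 0 _⟩
      fun m f => ⟨next (m + 1) f, next_measurable (m + 1) f⟩
  refine ⟨fun m => (ν m).1, fun m => (ν m).2,
    fun ω => strictMono_nat_of_lt_succ fun m => lt_next (m + 1) (ν m) ω, fun m => ?_⟩
  cases m with
  | zero => exact mem_next 0 _
  | succ m => exact mem_next (m + 1) (ν m)

end MeasurableSelection

theorem stmt_16_general {Ω E : Type*} [MeasurableSpace Ω] [TopologicalSpace E]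
    [TopologicalSpace.PseudoMetrizableSpace E] [SecondCountableTopology E] [MeasurableSpace E]
    [OpensMeasurableSpace E] {u : ℕ → Ω → E} (hu : ∀ n, Measurable (u n)) {y : Ω → E}
    (hy : Measurable y) :
    ∃ ν : ℕ → Ω → ℕ, (∀ m, Measurable (ν m)) ∧ (∀ ω, StrictMono (ν · ω)) ∧
      ∀ ω, MapClusterPt (y ω) atTop (u · ω) →
        Tendsto (fun m => u (ν m ω) ω) atTop (nhds (y ω)) := by
  let := TopologicalSpace.pseudoMetrizableSpacePseudoMetric E
  have measurable_close (m n : ℕ) :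
      MeasurableSet {ω | dist (u n ω) (y ω) < 1 / ((m : ℝ) + 1)} :=
    measurableSet_lt ((hu n).dist hy) measurable_const
  obtain ⟨ν, ν_measurable, ν_strictMono, ν_close⟩ :=
    exists_measurable_strictMono_mem_of_frequently measurable_close
  refine ⟨ν, ν_measurable, ν_strictMono, fun ω hω => ?_⟩
  have dist_lt (m : ℕ) : dist (u (ν m ω) ω) (y ω) < 1 / ((m : ℝ) + 1) :=
    ν_close m ω (hω.frequently (Metric.ball_mem_nhds _ Nat.one_div_pos_of_nat))
  exact tendsto_iff_dist_tendsto_zero.2 <|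
    squeeze_zero (fun _ => dist_nonneg) (fun m => (dist_lt m).le)
      tendsto_one_div_add_atTop_nhds_zero_nat

/-- If `limsup_n y_n = y` a.s. (limsup taken in the extended reals) for
measurable real random variables `y_n, y`, then there are measurable `ℕ`-valued random
variables `ν_m`, a.s. strictly increasing in `m`, with `y_{ν_m(ω)}(ω) → y(ω)` a.s. -/
theorem stmt_16 {Ω : Type*} [MeasurableSpace Ω] (P : Measure Ω) [IsProbabilityMeasure P]
    (yn : ℕ → Ω → ℝ) (hyn : ∀ n, Measurable (yn n))
    (y : Ω → ℝ) (hy : Measurable y)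
    (hlimsup : ∀ᵐ ω ∂P, limsup (fun n => ((yn n ω : ℝ) : EReal)) atTop = ((y ω : ℝ) : EReal)) :
    ∃ ν : ℕ → Ω → ℕ, (∀ m, Measurable (ν m)) ∧
      (∀ m, ∀ᵐ ω ∂P, ν m ω < ν (m + 1) ω) ∧
      ∀ᵐ ω ∂P, Tendsto (fun m => yn (ν m ω) ω) atTop (nhds (y ω)) := by
  obtain ⟨ν, ν_measurable, ν_strictMono, ν_tendsto⟩ := stmt_16_general hyn hy
  exact ⟨ν, ν_measurable, fun m => ae_of_all P fun ω => ν_strictMono ω m.lt_succ_self,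
    hlimsup.mono fun ω hω => ν_tendsto ω (mapClusterPt_of_limsup_coe_eq hω)⟩
end
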